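/- arXiv:1309.4656 — 2 statements merged into one kernel-verified Lean document; each statement's English description precedes it below -/
import Mathlib

section
/- (Lemma 1, composite-alternative case.) Let x₁,…,xₙ be i.i.d. from the one-parameter exponential family f(x|θ) = h(x) exp[η(θ)T(x) − A(θ)] with η strictly increasing, fix θ₀ and γ > 0, and suppose θ* > θ₀ minimizes g_γ(θ,θ₀) over θ > θ₀. Let π be any probability measure supported on {θ : θ > θ₀}, and define the composite Bayes factor BF_{π0}(x) = ∫ ∏ᵢ [f(xᵢ|θ)/f(xᵢ|θ₀)] π(dθ). Then for every data point x, BF_{π0}(x) > γ implies BF_{*0}(x) > γ (where BF_{*0} is the Bayes factor of the point alternative θ*), and consequently for every data-generating parameter θ_t, P_{θ_t}[BF_{π0}(x) > γ] ≤ P_{θ_t}[BF_{*0}(x) > γ]. Hence the point mass at θ* defines a uniformly most powerful Bayesian test UMPBT(γ) among alternatives supported on {θ > θ₀}. -/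
open MeasureTheory

/-!
Against an alternative `θ` with `η θ₀ < η θ`, the likelihood ratio exceeds `γ` exactly when the
sufficient statistic `∑ i, T (x i)` exceeds `g_γ(θ, θ₀)`. A Bayes factor is an average of likelihood
ratios, so if it exceeds `γ` then so does the likelihood ratio against some `θ` that the prior
allows. Since `θ*` has the smallest critical value, its likelihood ratio exceeds `γ` as well.
-/

section ExponentialFamily

variable {X Θ : Type*} {n : ℕ}

/-- The density `f(x|θ) = h(x) exp[η(θ)T(x) − A(θ)]` of a one-parameter exponential family, for a
parameter `θ` ranging over an arbitrary type. -/
noncomputable def expFamilyDensity (h T : X → ℝ) (η A : Θ → ℝ) (x : X) (θ : Θ) : ℝ :=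
  h x * Real.exp (η θ * T x - A θ)

/-- The likelihood ratio of `θ` against `θ₀` for an i.i.d. sample `x` of density `f`, that is, the
Bayes factor of the point alternative `θ`. -/
noncomputable def likelihoodRatio (f : X → Θ → ℝ) (θ₀ θ : Θ) (x : Fin n → X) : ℝ :=
  ∏ i, f (x i) θ / f (x i) θ₀

/-- The Bayes factor `BF_{π0}(x)` of the composite alternative with prior `π` against `θ₀`, in terms
of the Bochner integral: it is `0` where the likelihood ratio is not `π`-integrable. -/
noncomputable def bayesFactor [MeasurableSpace Θ] (f : X → Θ → ℝ) (θ₀ : Θ) (π : Measure Θ)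
    (x : Fin n → X) : ℝ :=
  ∫ θ, likelihoodRatio f θ₀ θ x ∂π

/-- The function `g_γ(θ, θ₀)` for samples of size `n`: the value which the statistic `∑ i, T (x i)`
has to exceed for the evidence in favour of `θ` to exceed `γ`. -/
noncomputable def criticalValue (η A : Θ → ℝ) (n : ℕ) (γ : ℝ) (θ₀ θ : Θ) : ℝ :=
  (Real.log γ + n * (A θ - A θ₀)) / (η θ - η θ₀)

theorem exists_lt_of_lt_integral [MeasurableSpace Θ] {π : Measure Θ} [IsProbabilityMeasure π]
    {g : Θ → ℝ} {c : ℝ} {S : Set Θ} (hc : 0 ≤ c) (hS : ∀ᵐ θ ∂π, θ ∈ S) (hg : c < ∫ θ, g θ ∂π) :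
    ∃ θ ∈ S, c < g θ := by
  -- A non-integrable `g` would have integral `0 ≤ c`.
  have g_integrable : Integrable g π := .of_integral_ne_zero (hc.trans_lt hg).ne'
  obtain ⟨θ, hθ, integral_le⟩ := exists_notMem_null_integral_le g_integrable (ae_iff.1 hS)
  exact ⟨θ, not_not.1 hθ, hg.trans_le integral_le⟩

variable {h T : X → ℝ} {η A : Θ → ℝ} {γ : ℝ} {θ₀ θ : Θ}

theorem expFamilyDensity_div_expFamilyDensity {x : X} (hx : h x ≠ 0) :
    expFamilyDensity h T η A x θ / expFamilyDensity h T η A x θ₀ =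
      Real.exp ((η θ - η θ₀) * T x - (A θ - A θ₀)) := by
  rw [expFamilyDensity, expFamilyDensity, mul_div_mul_left _ _ hx, ← Real.exp_sub]
  congr 1
  ring

theorem likelihoodRatio_expFamilyDensity {x : Fin n → X} (hx : ∀ i, h (x i) ≠ 0) :
    likelihoodRatio (expFamilyDensity h T η A) θ₀ θ x =
      Real.exp ((η θ - η θ₀) * ∑ i, T (x i) - n * (A θ - A θ₀)) := by
  simp only [likelihoodRatio, expFamilyDensity_div_expFamilyDensity (hx _), ← Real.exp_sum,
    Finset.sum_sub_distrib, ← Finset.mul_sum, Finset.sum_const, Finset.card_univ,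
    Fintype.card_fin, nsmul_eq_mul, mul_sub]

theorem lt_likelihoodRatio_iff_criticalValue_lt {x : Fin n → X} (hx : ∀ i, h (x i) ≠ 0)
    (hγ : 0 < γ) (hη : η θ₀ < η θ) :
    γ < likelihoodRatio (expFamilyDensity h T η A) θ₀ θ x ↔
      criticalValue η A n γ θ₀ θ < ∑ i, T (x i) := by
  rw [likelihoodRatio_expFamilyDensity hx, ← Real.log_lt_iff_lt_exp hγ, criticalValue,
    div_lt_iff₀' (sub_pos.2 hη), lt_sub_iff_add_lt]

theorem lt_likelihoodRatio_of_lt_bayesFactor [MeasurableSpace Θ] {S : Set Θ} {θStar : Θ}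
    {π : Measure Θ} [IsProbabilityMeasure π] {x : Fin n → X} (hx : ∀ i, h (x i) ≠ 0)
    (hγ : 0 < γ) (hη : ∀ θ ∈ S, η θ₀ < η θ) (hθStar : θStar ∈ S)
    (hmin : IsMinOn (criticalValue η A n γ θ₀) S θStar) (hπ : ∀ᵐ θ ∂π, θ ∈ S)
    (hBF : γ < bayesFactor (expFamilyDensity h T η A) θ₀ π x) :
    γ < likelihoodRatio (expFamilyDensity h T η A) θ₀ θStar x := by
  obtain ⟨θ, hθ, hlt⟩ := exists_lt_of_lt_integral hγ.le hπ hBF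
  rw [lt_likelihoodRatio_iff_criticalValue_lt hx hγ (hη θStar hθStar)]
  calc criticalValue η A n γ θ₀ θStar ≤ criticalValue η A n γ θ₀ θ := hmin hθ
    _ < ∑ i, T (x i) := (lt_likelihoodRatio_iff_criticalValue_lt hx hγ (hη θ hθ)).1 hlt

theorem stmt_2_general [MeasurableSpace X] [MeasurableSpace Θ] {S : Set Θ} {θStar : Θ}
    (hpos : ∀ x, 0 < h x) (hγ : 0 < γ) (hη : ∀ θ ∈ S, η θ₀ < η θ) (hθStar : θStar ∈ S)
    (hmin : IsMinOn (criticalValue η A n γ θ₀) S θStar)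
    (π : Measure Θ) [IsProbabilityMeasure π] (hπ : ∀ᵐ θ ∂π, θ ∈ S) :
    (∀ x : Fin n → X, γ < bayesFactor (expFamilyDensity h T η A) θ₀ π x →
      γ < likelihoodRatio (expFamilyDensity h T η A) θ₀ θStar x) ∧
    ∀ P : Measure (Fin n → X),
      P {x | γ < bayesFactor (expFamilyDensity h T η A) θ₀ π x} ≤
        P {x | γ < likelihoodRatio (expFamilyDensity h T η A) θ₀ θStar x} := by
  have evidence_imp (x : Fin n → X) :=
    lt_likelihoodRatio_of_lt_bayesFactor (x := x) (T := T) (fun i => (hpos (x i)).ne')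
      hγ hη hθStar hmin hπ
  exact ⟨evidence_imp, fun P => measure_mono evidence_imp⟩

end ExponentialFamily

/-- Lemma 1, composite-alternative case: in the one-parameter
exponential family `f(x|θ) = h(x) exp[η(θ)T(x) − A(θ)]` with `η` strictly
increasing, if `θ* > θ₀` minimizes `g_γ(θ,θ₀)` over `θ > θ₀` and `π` is any prior
(probability measure) supported on `{θ : θ > θ₀}`, then for every data point `x`,
`BF_{π0}(x) > γ` implies `BF_{*0}(x) > γ`; consequently, for every data-generating
parameter `θ_t`, `P_{θ_t}[BF_{π0} > γ] ≤ P_{θ_t}[BF_{*0} > γ]`.  Hence the point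
mass at `θ*` defines a UMPBT(γ) among alternatives supported on `{θ > θ₀}`. -/
theorem stmt_2 {X : Type*} [MeasurableSpace X] (μ : Measure X) (n : ℕ)
    (h T : X → ℝ) (η A : ℝ → ℝ)
    (hη : StrictMono η) (hpos : ∀ x, 0 < h x)
    (hT : Measurable T) (hh : Measurable h)
    (f : X → ℝ → ℝ)
    (hf : ∀ x θ, f x θ = h x * Real.exp (η θ * T x - A θ))
    (hprob : ∀ θ : ℝ,
      IsProbabilityMeasure (μ.withDensity fun x => ENNReal.ofReal (f x θ)))
    (θ₀ θStar : ℝ) (γ : ℝ) (hγ : 0 < γ)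
    (hθStar : θ₀ < θStar)
    (hmin : ∀ θ, θ₀ < θ →
      (Real.log γ + n * (A θStar - A θ₀)) / (η θStar - η θ₀) ≤
        (Real.log γ + n * (A θ - A θ₀)) / (η θ - η θ₀))
    (π : Measure ℝ) [IsProbabilityMeasure π]
    (hπ : π {θ | θ ≤ θ₀} = 0) :
    (∀ x : Fin n → X,
      γ < ∫ θ, (∏ i, f (x i) θ / f (x i) θ₀) ∂π →
        γ < ∏ i, f (x i) θStar / f (x i) θ₀) ∧
    (∀ θt : ℝ,
      (Measure.pi fun _ : Fin n => μ.withDensity fun x => ENNReal.ofReal (f x θt))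
          {x | γ < ∫ θ, (∏ i, f (x i) θ / f (x i) θ₀) ∂π} ≤
        (Measure.pi fun _ : Fin n => μ.withDensity fun x => ENNReal.ofReal (f x θt))
          {x | γ < ∏ i, f (x i) θStar / f (x i) θ₀}) := by
  obtain rfl : f = expFamilyDensity h T η A := funext₂ hf
  have general := stmt_2_general (T := T) hpos hγ (fun _ hθ => hη hθ) hθStar hmin π
    (S := Set.Ioi θ₀) (by simpa only [ae_iff, Set.mem_Ioi, not_lt] using hπ)
  exact ⟨general.1, fun θt => general.2 _⟩
end

section
/- Fix μ₀ ∈ ℝ, σ > 0, n ≥ 1, and γ > 1. The function h(μ₁) = σ² log(γ)/(n(μ₁ − μ₀)) + (μ₀ + μ₁)/2, defined for μ₁ > μ₀, attains its unique minimum at μ₁* = μ₀ + σ√(2 log γ / n), and the minimum value is h(μ₁*) = μ₀ + σ√(2 log γ / n) = μ₁*. Consequently, among all point alternatives μ₁ > μ₀ for the test of a normal mean with known variance σ², the alternative μ₁* maximizes, for every data-generating mean, the probability that the Bayes factor against μ₀ exceeds γ; i.e., μ₁* defines the one-sided UMPBT(γ). -/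
open MeasureTheory ProbabilityTheory

/-!
Completing the square around `μ* = μ₀ + √(2 v log γ / n)`, where `v = σ²`, gives
`h(μ₁) = μ* + (μ₁ - μ*)² / (2 (μ₁ - μ₀))`, so `μ*` is the only minimizer of `h` on `μ₁ > μ₀`, and
it is a fixed point of `h`. Since the Bayes factor of `μ₁` exceeds `γ` exactly when the sample mean
exceeds `h(μ₁)`, the event for any `μ₁` is contained in the event for `μ*`, whatever the
distribution of the data.
-/

open scoped NNReal

section Threshold

/-- The function `h` of the theorem, with `v = σ²`: the value that the mean of `n` observations must
exceed for the Bayes factor of `μ₁` against `μ₀` to exceed `γ`. Meaningful for `μ₀ < μ₁`. -/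
noncomputable def evidenceThreshold (μ₀ : ℝ) (v : ℝ≥0) (n : ℕ) (γ μ₁ : ℝ) : ℝ :=
  v * Real.log γ / (n * (μ₁ - μ₀)) + (μ₀ + μ₁) / 2

/-- The alternative `μ*` of the one-sided UMPBT(`γ`) for a normal mean with known variance `v`,
based on `n` observations. -/
noncomputable def umpbtMean (μ₀ : ℝ) (v : ℝ≥0) (n : ℕ) (γ : ℝ) : ℝ :=
  μ₀ + √(2 * v * Real.log γ / n)

variable {μ₀ μ₁ γ : ℝ} {v : ℝ≥0} {n : ℕ}

lemma lt_umpbtMean (hv : v ≠ 0) (hn : n ≠ 0) (hγ : 1 < γ) : μ₀ < umpbtMean μ₀ v n γ := by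
  have hlog : 0 < Real.log γ := Real.log_pos hγ
  exact lt_add_of_pos_right μ₀ (Real.sqrt_pos.mpr (by positivity))

lemma evidenceThreshold_eq_umpbtMean_add (hγ : 1 ≤ γ) (hμ₁ : μ₁ ≠ μ₀) :
    evidenceThreshold μ₀ v n γ μ₁ =
      umpbtMean μ₀ v n γ + (μ₁ - umpbtMean μ₀ v n γ) ^ 2 / (2 * (μ₁ - μ₀)) := by
  have hlog : 0 ≤ Real.log γ := Real.log_nonneg hγ
  have : μ₁ - μ₀ ≠ 0 := sub_ne_zero.mpr hμ₁
  unfold evidenceThreshold umpbtMean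
  set d := √(2 * v * Real.log γ / n) with hd
  have hd_sq : v * Real.log γ / n = d ^ 2 / 2 := by
    rw [hd, Real.sq_sqrt (by positivity)]
    ring
  rw [← div_div, hd_sq]
  field_simp
  ring

lemma umpbtMean_le_evidenceThreshold (hγ : 1 ≤ γ) (hμ₁ : μ₀ < μ₁) :
    umpbtMean μ₀ v n γ ≤ evidenceThreshold μ₀ v n γ μ₁ := by
  have : 0 < μ₁ - μ₀ := sub_pos.mpr hμ₁
  rw [evidenceThreshold_eq_umpbtMean_add hγ hμ₁.ne']
  exact le_add_of_nonneg_right (by positivity)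

lemma evidenceThreshold_eq_umpbtMean_iff (hγ : 1 ≤ γ) (hμ₁ : μ₁ ≠ μ₀) :
    evidenceThreshold μ₀ v n γ μ₁ = umpbtMean μ₀ v n γ ↔ μ₁ = umpbtMean μ₀ v n γ := by
  simp [evidenceThreshold_eq_umpbtMean_add hγ hμ₁, sub_eq_zero, hμ₁]

lemma evidenceThreshold_umpbtMean (hv : v ≠ 0) (hn : n ≠ 0) (hγ : 1 < γ) :
    evidenceThreshold μ₀ v n γ (umpbtMean μ₀ v n γ) = umpbtMean μ₀ v n γ :=
  (evidenceThreshold_eq_umpbtMean_iff hγ.le (lt_umpbtMean hv hn hγ).ne').mpr rfl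

end Threshold

section BayesFactor

variable {ι : Type*} [Fintype ι] {μ₀ μ₁ γ : ℝ} {v : ℝ≥0}

/-- The Bayes factor of the point hypothesis `μ₁` against `μ₀` for independent observations `x i`
from a normal distribution with known variance `v`. -/
noncomputable def gaussianBayesFactor (μ₀ : ℝ) (v : ℝ≥0) (μ₁ : ℝ) (x : ι → ℝ) : ℝ :=
  ∏ i, gaussianPDFReal μ₁ v (x i) / gaussianPDFReal μ₀ v (x i)

lemma gaussianPDFReal_div_gaussianPDFReal (hv : v ≠ 0) (μ₀ μ₁ y : ℝ) :
    gaussianPDFReal μ₁ v y / gaussianPDFReal μ₀ v y =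
      Real.exp ((μ₁ - μ₀) / v * (y - (μ₀ + μ₁) / 2)) := by
  have hnorm : (√(2 * Real.pi * v))⁻¹ ≠ 0 := by positivity
  rw [gaussianPDFReal, gaussianPDFReal, mul_div_mul_left _ _ hnorm, ← Real.exp_sub]
  congr 1
  field_simp
  ring

lemma gaussianBayesFactor_eq_exp (hv : v ≠ 0) (μ₀ μ₁ : ℝ) (x : ι → ℝ) :
    gaussianBayesFactor μ₀ v μ₁ x =
      Real.exp ((μ₁ - μ₀) / v * (∑ i, x i - Fintype.card ι * ((μ₀ + μ₁) / 2))) := by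
  simp only [gaussianBayesFactor, gaussianPDFReal_div_gaussianPDFReal hv, ← Real.exp_sum,
    ← Finset.mul_sum, Finset.sum_sub_distrib, Finset.sum_const, Finset.card_univ, nsmul_eq_mul]

variable [Nonempty ι]

lemma lt_gaussianBayesFactor_iff (hv : v ≠ 0) (hγ : 0 < γ) (hμ₁ : μ₀ < μ₁) (x : ι → ℝ) :
    γ < gaussianBayesFactor μ₀ v μ₁ x ↔
      evidenceThreshold μ₀ v (Fintype.card ι) γ μ₁ < (∑ i, x i) / Fintype.card ι := by
  have hsub : 0 < μ₁ - μ₀ := sub_pos.mpr hμ₁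
  have hcard : (0 : ℝ) < Fintype.card ι := Nat.cast_pos.mpr Fintype.card_pos
  have hthreshold : evidenceThreshold μ₀ v (Fintype.card ι) γ μ₁ * Fintype.card ι =
      Real.log γ / ((μ₁ - μ₀) / v) + Fintype.card ι * ((μ₀ + μ₁) / 2) := by
    unfold evidenceThreshold
    field_simp
  rw [gaussianBayesFactor_eq_exp hv, ← Real.log_lt_iff_lt_exp hγ, lt_div_iff₀ hcard, hthreshold,
    ← lt_sub_iff_add_lt, div_lt_iff₀' (by positivity)]

lemma setOf_lt_gaussianBayesFactor_subset_umpbtMean (hv : v ≠ 0) (hγ : 1 < γ) (hμ₁ : μ₀ < μ₁) :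
    {x : ι → ℝ | γ < gaussianBayesFactor μ₀ v μ₁ x} ⊆
      {x | γ < gaussianBayesFactor μ₀ v (umpbtMean μ₀ v (Fintype.card ι) γ) x} := by
  intro x hx
  have hγ₀ : 0 < γ := zero_lt_one.trans hγ
  have hmean := (lt_gaussianBayesFactor_iff hv hγ₀ hμ₁ x).mp hx
  refine (lt_gaussianBayesFactor_iff hv hγ₀ (lt_umpbtMean hv Fintype.card_ne_zero hγ) x).mpr ?_
  rw [evidenceThreshold_umpbtMean hv Fintype.card_ne_zero hγ]
  exact (umpbtMean_le_evidenceThreshold hγ.le hμ₁).trans_lt hmean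

end BayesFactor

lemma umpbtMean_toNNReal_sq {σ : ℝ} (hσ : 0 ≤ σ) (μ₀ : ℝ) (n : ℕ) (γ : ℝ) :
    umpbtMean μ₀ (σ ^ 2).toNNReal n γ = μ₀ + σ * √(2 * Real.log γ / n) := by
  rw [umpbtMean, Real.coe_toNNReal _ (sq_nonneg σ),
    show 2 * σ ^ 2 * Real.log γ / n = σ ^ 2 * (2 * Real.log γ / n) by ring,
    Real.sqrt_mul (sq_nonneg σ), Real.sqrt_sq hσ]

lemma gaussianPDFReal_toNNReal_sq (σ m y : ℝ) :
    gaussianPDFReal m (σ ^ 2).toNNReal y =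
      Real.exp (-(y - m) ^ 2 / (2 * σ ^ 2)) / √(2 * Real.pi * σ ^ 2) := by
  rw [gaussianPDFReal, Real.coe_toNNReal _ (sq_nonneg σ), inv_mul_eq_div]

theorem stmt_9_general (μ₀ σ : ℝ) (hσ : 0 < σ) (n : ℕ) (hn : 1 ≤ n)
    (γ : ℝ) (hγ : 1 < γ)
    (hfun : ℝ → ℝ)
    (hh : ∀ μ₁, hfun μ₁ = σ ^ 2 * Real.log γ / (n * (μ₁ - μ₀)) + (μ₀ + μ₁) / 2)
    (μstar : ℝ) (hμstar : μstar = μ₀ + σ * Real.sqrt (2 * Real.log γ / n))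
    (φ : ℝ → ℝ → ℝ)
    (hφ : ∀ y m, φ y m =
      Real.exp (-(y - m) ^ 2 / (2 * σ ^ 2)) / Real.sqrt (2 * Real.pi * σ ^ 2)) :
    μ₀ < μstar ∧
    (∀ μ₁, μ₀ < μ₁ → hfun μstar ≤ hfun μ₁ ∧ (hfun μ₁ = hfun μstar → μ₁ = μstar)) ∧
    hfun μstar = μstar ∧
    (∀ (P : Measure (Fin n → ℝ)) (μ₁ : ℝ), μ₀ < μ₁ →
      P {x | γ < ∏ i, φ (x i) μ₁ / φ (x i) μ₀} ≤ P {x | γ < ∏ i, φ (x i) μstar / φ (x i) μ₀}) := by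
  have hn₀ : n ≠ 0 := Nat.one_le_iff_ne_zero.mp hn
  have : NeZero n := ⟨hn₀⟩
  set v := (σ ^ 2).toNNReal
  have hv : v ≠ 0 := (Real.toNNReal_pos.mpr (pow_pos hσ 2)).ne'
  obtain rfl : hfun = evidenceThreshold μ₀ v n γ := by
    ext μ₁
    rw [hh, evidenceThreshold, Real.coe_toNNReal _ (sq_nonneg σ)]
  obtain rfl : φ = fun y m ↦ gaussianPDFReal m v y := by
    ext y m
    rw [hφ, gaussianPDFReal_toNNReal_sq]
  obtain rfl : μstar = umpbtMean μ₀ v n γ := hμstar.trans (umpbtMean_toNNReal_sq hσ.le ..).symm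
  have hfixed := evidenceThreshold_umpbtMean (μ₀ := μ₀) hv hn₀ hγ
  refine ⟨lt_umpbtMean hv hn₀ hγ, fun μ₁ hμ₁ ↦ ?_, hfixed, fun P μ₁ hμ₁ ↦ measure_mono ?_⟩
  · rw [hfixed, evidenceThreshold_eq_umpbtMean_iff hγ.le hμ₁.ne']
    exact ⟨umpbtMean_le_evidenceThreshold hγ.le hμ₁, id⟩
  · simpa only [gaussianBayesFactor, Fintype.card_fin] using
      setOf_lt_gaussianBayesFactor_subset_umpbtMean (ι := Fin n) hv hγ hμ₁

/-- for `μ₀ ∈ ℝ`, `σ > 0`, `n ≥ 1`, `γ > 1`, the function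
`h(μ₁) = σ² log(γ)/(n(μ₁ − μ₀)) + (μ₀ + μ₁)/2` on `μ₁ > μ₀` attains its unique
minimum at `μ₁* = μ₀ + σ√(2 log γ / n)`, with minimum value `h(μ₁*) = μ₁*`.
Consequently, among all point alternatives `μ₁ > μ₀` for the test of a normal
mean with known variance `σ²`, the alternative `μ₁*` maximizes, for every
data-generating mean `μ_t`, the probability that the Bayes factor against `μ₀`
exceeds `γ`; i.e., `μ₁*` defines the one-sided UMPBT(γ). -/
theorem stmt_9 (μ₀ σ : ℝ) (hσ : 0 < σ) (n : ℕ) (hn : 1 ≤ n)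
    (γ : ℝ) (hγ : 1 < γ)
    (hfun : ℝ → ℝ)
    (hh : ∀ μ₁, hfun μ₁ = σ ^ 2 * Real.log γ / (n * (μ₁ - μ₀)) + (μ₀ + μ₁) / 2)
    (μstar : ℝ) (hμstar : μstar = μ₀ + σ * Real.sqrt (2 * Real.log γ / n))
    (φ : ℝ → ℝ → ℝ)
    (hφ : ∀ y m, φ y m =
      Real.exp (-(y - m) ^ 2 / (2 * σ ^ 2)) / Real.sqrt (2 * Real.pi * σ ^ 2)) :
    μ₀ < μstar ∧
    (∀ μ₁, μ₀ < μ₁ → hfun μstar ≤ hfun μ₁ ∧ (hfun μ₁ = hfun μstar → μ₁ = μstar)) ∧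
    hfun μstar = μstar ∧
    (∀ μt μ₁ : ℝ, μ₀ < μ₁ →
      (Measure.pi fun _ : Fin n => gaussianReal μt (Real.toNNReal (σ ^ 2)))
          {x | γ < ∏ i, φ (x i) μ₁ / φ (x i) μ₀} ≤
        (Measure.pi fun _ : Fin n => gaussianReal μt (Real.toNNReal (σ ^ 2)))
          {x | γ < ∏ i, φ (x i) μstar / φ (x i) μ₀}) := by
  obtain ⟨hlt, hmin, hfixed, hprob⟩ := stmt_9_general μ₀ σ hσ n hn γ hγ hfun hh μstar hμstar φ hφ
  exact ⟨hlt, hmin, hfixed, fun μt ↦ hprob _⟩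
end
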